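/- arXiv:2408.14182 — 2 statements merged into one kernel-verified Lean document; each statement's English description precedes it below -/
import Mathlib

section
/- The sequence (n/ln n)·(B_n/E_n^* − 1) converges to −1/12 as n → ∞. -/
/-- Principal branch of the Lambert W function on `[0, ∞)`: for `x ≥ 0`,
`lambertW x` is the unique `y ≥ 0` with `y * exp y = x`. -/
noncomputable def lambertW (x : ℝ) : ℝ := Function.invFun (fun y : ℝ => y * Real.exp y) x

/-- Bell numbers: `Bell 0 = 1` and `Bell (n+1) = ∑_{k=0}^{n} C(n,k) * Bell k`. -/
def Bell : ℕ → ℕ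
  | 0 => 1
  | n + 1 => ∑ k ∈ (Finset.range (n + 1)).attach, (n.choose k.1) * Bell k.1
decreasing_by exact Finset.mem_range.mp k.2

/-- `E* n = exp(e^{W(n)} + n W(n) - (n+1)) / sqrt(1 + W(n))`. -/
noncomputable def Estar (n : ℕ) : ℝ :=
  Real.exp (Real.exp (lambertW n) + n * lambertW n - (n + 1)) / Real.sqrt (1 + lambertW n)

open Filter Topology MeasureTheory


lemma bt_step {f f' P P' : ℝ → ℂ} {C : ℝ} {m : ℕ} (hf : ∀ x, HasDerivAt f (f' x) x)
    (hP : ∀ x, HasDerivAt P (P' x) x) (h0 : f 0 = P 0)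
    (hb : ∀ x, ‖f' x - P' x‖ ≤ C * |x| ^ m) (x : ℝ) : ‖f x - P x‖ ≤ C * |x| ^ (m + 1) := by
  have hC : 0 ≤ C := by
    have := (norm_nonneg _).trans (hb 1)
    simpa using this
  have key := (convex_uIcc (0:ℝ) x).norm_image_sub_le_of_norm_hasDerivWithin_le
    (f := fun y => f y - P y) (f' := fun y => f' y - P' y) (C := C * |x| ^ m) (x := 0) (y := x)
    (fun y _ => ((hf y).sub (hP y)).hasDerivWithinAt)
    (fun y hy => (hb y).trans (by
      have : |y| ≤ |x| := by
        have := Set.abs_sub_left_of_mem_uIcc hy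
        simpa using this
      gcongr)) Set.left_mem_uIcc Set.right_mem_uIcc
  simp only [h0, sub_self, sub_zero, Real.norm_eq_abs] at key
  rw [pow_succ, ← mul_assoc]
  exact key

noncomputable def btE (e s : ℝ) : ℂ := Complex.exp (Complex.I * (e * s : ℝ))
noncomputable def btG (e s : ℝ) : ℂ := Complex.exp ((btE e s - 1) / e)

lemma btE_norm (e s : ℝ) : ‖btE e s‖ = 1 := by
  unfold btE; rw [mul_comm]; exact Complex.norm_exp_ofReal_mul_I _

lemma btE_zero (e : ℝ) : btE e 0 = 1 := by simp [btE]
lemma btG_zero (e : ℝ) : btG e 0 = 1 := by simp [btG, btE]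

lemma btE_re (e s : ℝ) : (btE e s).re = Real.cos (e * s) := by
  unfold btE; rw [mul_comm]; exact Complex.exp_ofReal_mul_I_re _

lemma btG_norm (e s : ℝ) : ‖btG e s‖ = Real.exp ((Real.cos (e * s) - 1) / e) := by
  unfold btG
  rw [Complex.norm_exp, Complex.div_ofReal_re, Complex.sub_re, btE_re, Complex.one_re]

lemma btG_norm_le {e : ℝ} (he : 0 < e) (s : ℝ) : ‖btG e s‖ ≤ 1 := by
  rw [btG_norm, Real.exp_le_one_iff]
  exact div_nonpos_of_nonpos_of_nonneg (by linarith [Real.cos_le_one (e * s)]) he.le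

lemma btE_deriv (e s : ℝ) : HasDerivAt (btE e) (Complex.I * e * btE e s) s := by
  have h1 : HasDerivAt (fun s : ℝ => Complex.I * ((e * s : ℝ) : ℂ)) (Complex.I * e) s := by
    have := ((hasDerivAt_id s).const_mul e).ofReal_comp.const_mul Complex.I
    simpa using this
  have := h1.cexp
  unfold btE
  convert! this using 1
  ring

lemma btG_deriv {e : ℝ} (he : 0 < e) (s : ℝ) :
    HasDerivAt (btG e) (Complex.I * btE e s * btG e s) s := by
  have h1 := (((btE_deriv e s).sub_const 1).div_const (e : ℂ)).cexp
  have he' : (e : ℂ) ≠ 0 := by exact_mod_cast he.ne'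
  unfold btG
  convert! h1 using 1
  field_simp

lemma btEk_deriv (e s : ℝ) (k : ℕ) :
    HasDerivAt (fun s => btE e s ^ k) (k * Complex.I * e * btE e s ^ k) s := by
  have := (btE_deriv e s).fun_pow k
  convert! this using 1
  rcases k with _ | k
  · simp
  · simp only [Nat.add_sub_cancel]; ring

lemma btEkG_deriv {e : ℝ} (he : 0 < e) (s : ℝ) (k : ℕ) :
    HasDerivAt (fun s => btE e s ^ k * btG e s)
      (Complex.I * (k * e * (btE e s ^ k * btG e s) + btE e s ^ (k+1) * btG e s)) s := by
  have := (btEk_deriv e s k).fun_mul (btG_deriv he s)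
  convert! this using 1
  ring

noncomputable def btX (e : ℝ) (k : ℕ) (s : ℝ) : ℂ := btE e s ^ k * btG e s

lemma btX_deriv {e : ℝ} (he : 0 < e) (k : ℕ) (s : ℝ) :
    HasDerivAt (btX e k) (Complex.I * (k * e * btX e k s + btX e (k+1) s)) s := btEkG_deriv he s k

lemma btX_zero (e : ℝ) (k : ℕ) : btX e k 0 = 1 := by simp [btX, btE_zero, btG_zero]

lemma btX_norm {e : ℝ} (he : 0 < e) (k : ℕ) (s : ℝ) : ‖btX e k s‖ ≤ 1 := by
  simp [btX, btE_norm, btG_norm_le he]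

/-- the derivatives -/
noncomputable def btg (e : ℝ) : ℕ → ℝ → ℂ
  | 0, s => btX e 0 s
  | 1, s => Complex.I * btX e 1 s
  | 2, s => -(e * btX e 1 s + btX e 2 s)
  | 3, s => -Complex.I * (e^2 * btX e 1 s + 3 * e * btX e 2 s + btX e 3 s)
  | 4, s => e^3 * btX e 1 s + 7 * e^2 * btX e 2 s + 6 * e * btX e 3 s + btX e 4 s
  | _, s => Complex.I * (e^4 * btX e 1 s + 15 * e^3 * btX e 2 s + 25 * e^2 * btX e 3 s
      + 10 * e * btX e 4 s + btX e 5 s)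

lemma btg_deriv {e : ℝ} (he : 0 < e) (k : ℕ) (hk : k < 5) (s : ℝ) :
    HasDerivAt (btg e k) (btg e (k+1) s) s := by
  have h1 := btX_deriv he 1 s
  have h2 := btX_deriv he 2 s
  have h3 := btX_deriv he 3 s
  have h4 := btX_deriv he 4 s
  interval_cases k
  · convert! btX_deriv he 0 s using 1
    simp [btg]
  · convert! h1.const_mul Complex.I using 1
    simp only [btg]; push_cast; linear_combination (-(e * btX e 1 s + btX e 2 s)) * Complex.I_sq
  · convert! ((h1.const_mul (e:ℂ)).fun_add h2).fun_neg using 1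
    simp only [btg]; push_cast; ring
  · convert! (((h1.const_mul ((e:ℂ)^2)).fun_add (h2.const_mul (3*(e:ℂ)))).fun_add h3).const_mul (-Complex.I) using 1
    simp only [btg]; push_cast
    linear_combination ((e^3 * btX e 1 s + 7 * e^2 * btX e 2 s + 6 * e * btX e 3 s + btX e 4 s)) * Complex.I_sq
  · convert! ((((h1.const_mul ((e:ℂ)^3)).fun_add (h2.const_mul (7*(e:ℂ)^2))).fun_add (h3.const_mul (6*(e:ℂ)))).fun_add h4) using 1
    simp only [btg]; push_cast; ring

lemma btg_norm3 {e : ℝ} (he : 0 < e) (he1 : e ≤ 1) (s : ℝ) : ‖btg e 3 s‖ ≤ 5 := by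
  have h1 := btX_norm he 1 s
  have h2 := btX_norm he 2 s
  have h3 := btX_norm he 3 s
  have e2 : e^2 ≤ 1 := pow_le_one₀ he.le he1
  simp only [btg, norm_mul, norm_neg, Complex.norm_I, one_mul]
  refine (norm_add₃_le).trans ?_
  simp only [norm_mul, norm_pow, Complex.norm_real, Real.norm_eq_abs, abs_of_pos he, Complex.norm_ofNat]
  have : e^2 * ‖btX e 1 s‖ ≤ 1 * 1 := by gcongr
  have : 3 * e * ‖btX e 2 s‖ ≤ 3 * 1 * 1 := by gcongr
  linarith

lemma btg_norm4 {e : ℝ} (he : 0 < e) (he1 : e ≤ 1) (s : ℝ) : ‖btg e 4 s‖ ≤ 15 := by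
  have h1 := btX_norm he 1 s
  have h2 := btX_norm he 2 s
  have h3 := btX_norm he 3 s
  have h4 := btX_norm he 4 s
  have e2 : e^2 ≤ 1 := pow_le_one₀ he.le he1
  have e3 : e^3 ≤ 1 := pow_le_one₀ he.le he1
  simp only [btg]
  refine (norm_add₄_le).trans ?_
  simp only [norm_mul, norm_pow, Complex.norm_real, Real.norm_eq_abs, abs_of_pos he, Complex.norm_ofNat]
  have : e^3 * ‖btX e 1 s‖ ≤ 1 * 1 := by gcongr
  have : 7 * e^2 * ‖btX e 2 s‖ ≤ 7 * 1 * 1 := by gcongr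
  have : 6 * e * ‖btX e 3 s‖ ≤ 6 * 1 * 1 := by gcongr
  linarith

lemma btg_norm5 {e : ℝ} (he : 0 < e) (he1 : e ≤ 1) (s : ℝ) : ‖btg e 5 s‖ ≤ 52 := by
  have h1 := btX_norm he 1 s
  have h2 := btX_norm he 2 s
  have h3 := btX_norm he 3 s
  have h4 := btX_norm he 4 s
  have h5 := btX_norm he 5 s
  have e2 : e^2 ≤ 1 := pow_le_one₀ he.le he1
  have e3 : e^3 ≤ 1 := pow_le_one₀ he.le he1
  have e4 : e^4 ≤ 1 := pow_le_one₀ he.le he1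
  simp only [btg, norm_mul, Complex.norm_I, one_mul]
  refine (norm_add_le _ _).trans ((add_le_add_left norm_add₄_le _).trans ?_)
  simp only [norm_mul, norm_pow, Complex.norm_real, Real.norm_eq_abs, abs_of_pos he, Complex.norm_ofNat]
  have : e^4 * ‖btX e 1 s‖ ≤ 1 * 1 := by gcongr
  have : 15 * e^3 * ‖btX e 2 s‖ ≤ 15 * 1 * 1 := by gcongr
  have : 25 * e^2 * ‖btX e 3 s‖ ≤ 25 * 1 * 1 := by gcongr
  have : 10 * e * ‖btX e 4 s‖ ≤ 10 * 1 * 1 := by gcongr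
  linarith

/-- Generic Taylor: if `g k` differentiates to `g (k+1)`. -/
lemma bt_taylor (g : ℕ → ℝ → ℂ) (N : ℕ) (hg : ∀ k < N, ∀ s, HasDerivAt (g k) (g (k+1) s) s)
    (C : ℝ) (hC : ∀ s, ‖g N s‖ ≤ C) (j : ℕ) : ∀ k, k + j = N → ∀ s,
      ‖g k s - ∑ i ∈ Finset.range j, g (k+i) 0 * ((s:ℂ) ^ i / (i.factorial : ℂ))‖ ≤ C * |s| ^ j := by
  induction j with
  | zero => intro k hk s; obtain rfl : k = N := by omega
            simpa using hC s
  | succ j ih =>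
    intro k hk s
    refine bt_step (f' := g (k+1))
      (P := fun s : ℝ => ∑ i ∈ Finset.range (j+1), g (k+i) 0 * ((s:ℂ) ^ i / (i.factorial : ℂ)))
      (P' := fun s : ℝ => ∑ i ∈ Finset.range j, g (k+1+i) 0 * ((s:ℂ) ^ i / (i.factorial : ℂ)))
      (hg k (by omega)) ?_ ?_ (ih (k+1) (by omega)) s
    · intro x
      simp only [Finset.sum_range_succ', pow_zero]
      apply HasDerivAt.add_const
      apply HasDerivAt.fun_sum
      intro i _
      have h1 : HasDerivAt (fun s : ℝ => (s:ℂ) ^ (i+1)) (((i+1 : ℕ):ℂ) * (x:ℂ)^i) x := by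
        have h0 : HasDerivAt (fun s : ℝ => (s:ℂ)) 1 x := by
          simpa using (hasDerivAt_id x).ofReal_comp
        simpa using h0.fun_pow (i+1)
      have h2 := (h1.div_const (((i+1).factorial : ℕ) : ℂ)).const_mul (g (k+(i+1)) 0)
      convert! h2 using 1
      rw [Nat.factorial_succ, show k+1+i = k+(i+1) by ring]
      have : (i.factorial : ℂ) ≠ 0 := by exact_mod_cast i.factorial_ne_zero
      have : ((i+1 : ℕ) : ℂ) ≠ 0 := by exact_mod_cast (Nat.succ_ne_zero i)
      push_cast at this ⊢
      field_simp
    · simp [Finset.sum_range_succ']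

lemma btg_zero (e s : ℝ) : btg e 0 s = btG e s := by simp [btg, btX]

lemma bt_im3 {e : ℝ} (he : 0 < e) (he1 : e ≤ 1) (s : ℝ) : |(btG e s).im - s| ≤ 5 * |s| ^ 3 := by
  have h := bt_taylor (btg e) 3 (fun k hk => btg_deriv he k (by omega)) 5 (btg_norm3 he he1) 3 0 rfl s
  refine le_trans (le_of_eq ?_) ((Complex.abs_im_le_norm _).trans h)
  simp only [Finset.sum_range_succ, Finset.sum_range_zero, btg_zero, zero_add]
  simp only [btg, btX_zero, btG_zero]
  rw [show btG e s - (1 * ((s:ℂ)^0/(Nat.factorial 0 : ℂ)) + Complex.I * 1 * ((s:ℂ)^1/(Nat.factorial 1 : ℂ)) + -((e:ℂ) * 1 + 1) * ((s:ℂ)^2/(Nat.factorial 2 : ℂ)))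
    = btG e s - (((1 - (1+e)*s^2/2 : ℝ) : ℂ) + ((s : ℝ) : ℂ) * Complex.I) by
      simp [Nat.factorial]; ring]
  simp only [Complex.sub_im, Complex.add_im, Complex.im_ofReal_mul, Complex.ofReal_im, Complex.I_im]
  congr 1; ring

lemma bt_4 {e : ℝ} (he : 0 < e) (he1 : e ≤ 1) (s : ℝ) :
    |(btG e s).re - 1 + (1+e)*s^2/2| ≤ 15 * |s| ^ 4 ∧
    |(btG e s).im - s + (1+3*e+e^2)*s^3/6| ≤ 15 * |s| ^ 4 := by
  have h := bt_taylor (btg e) 4 (fun k hk => btg_deriv he k (by omega)) 15 (btg_norm4 he he1) 4 0 rfl s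
  simp only [Finset.sum_range_succ, Finset.sum_range_zero, btg_zero, zero_add] at h
  simp only [btg, btX_zero, btG_zero] at h
  rw [show btG e s - (1 * ((s:ℂ)^0/(Nat.factorial 0 : ℂ)) + Complex.I * 1 * ((s:ℂ)^1/(Nat.factorial 1 : ℂ)) + -((e:ℂ) * 1 + 1) * ((s:ℂ)^2/(Nat.factorial 2 : ℂ))
      + -Complex.I * ((e:ℂ)^2*1 + 3 * e * 1 + 1) * ((s:ℂ)^3/(Nat.factorial 3 : ℂ)))
    = btG e s - (((1 - (1+e)*s^2/2 : ℝ) : ℂ) + ((s - (1+3*e+e^2)*s^3/6 : ℝ) : ℂ) * Complex.I) by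
      simp [Nat.factorial]; ring] at h
  constructor
  · refine le_trans (le_of_eq ?_) ((Complex.abs_re_le_norm _).trans h)
    simp only [Complex.sub_re, Complex.add_re, Complex.re_ofReal_mul, Complex.ofReal_re, Complex.I_re]
    congr 1; ring
  · refine le_trans (le_of_eq ?_) ((Complex.abs_im_le_norm _).trans h)
    simp only [Complex.sub_im, Complex.add_im, Complex.im_ofReal_mul, Complex.ofReal_im, Complex.I_im]
    congr 1; ring

lemma bt_5 {e : ℝ} (he : 0 < e) (he1 : e ≤ 1) (s : ℝ) :
    |(btG e s).re - 1 + (1+e)*s^2/2 - (1+6*e+7*e^2+e^3)*s^4/24| ≤ 52 * |s| ^ 5 := by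
  have h := bt_taylor (btg e) 5 (fun k hk => btg_deriv he k (by omega)) 52 (btg_norm5 he he1) 5 0 rfl s
  simp only [Finset.sum_range_succ, Finset.sum_range_zero, btg_zero, zero_add] at h
  simp only [btg, btX_zero, btG_zero] at h
  rw [show btG e s - (1 * ((s:ℂ)^0/(Nat.factorial 0 : ℂ)) + Complex.I * 1 * ((s:ℂ)^1/(Nat.factorial 1 : ℂ)) + -((e:ℂ) * 1 + 1) * ((s:ℂ)^2/(Nat.factorial 2 : ℂ))
      + -Complex.I * ((e:ℂ)^2*1 + 3 * e * 1 + 1) * ((s:ℂ)^3/(Nat.factorial 3 : ℂ))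
      + ((e:ℂ)^3*1 + 7 * e^2 * 1 + 6 * e * 1 + 1) * ((s:ℂ)^4/(Nat.factorial 4 : ℂ)))
    = btG e s - (((1 - (1+e)*s^2/2 + (1+6*e+7*e^2+e^3)*s^4/24 : ℝ) : ℂ) + ((s - (1+3*e+e^2)*s^3/6 : ℝ) : ℂ) * Complex.I) by
      simp [Nat.factorial]; ring] at h
  refine le_trans (le_of_eq ?_) ((Complex.abs_re_le_norm _).trans h)
  simp only [Complex.sub_re, Complex.add_re, Complex.re_ofReal_mul, Complex.ofReal_re, Complex.I_re]
  congr 1; ring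


lemma bt_stirling_upper (n : ℕ) (hn : 1 ≤ n) :
    Stirling.stirlingSeq n ≤ √Real.pi * Real.exp (1 / (12 * n)) := by
  have hmono : ∀ m, n ≤ m → Real.log (Stirling.stirlingSeq n) ≤
      Real.log (Stirling.stirlingSeq m) + 1 / (12 * n) - 1 / (12 * m) := by
    intro m hm
    induction m, hm using Nat.le_induction with
    | base => simp
    | succ m hm ih =>
      have h := Stirling.log_stirlingSeq_sdiff_le m
      have hm0 : (m:ℝ) ≠ 0 := by have : 0 < m := by omega
                                 positivity
      have : (1:ℝ) / (12 * m * (m+1)) = 1 / (12 * m) - 1 / (12 * ((m+1 : ℕ):ℝ)) := by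
        push_cast; field_simp; ring
      linarith
  have hpi : (0:ℝ) < √Real.pi := by positivity
  have hlim : Tendsto (fun m => Real.log (Stirling.stirlingSeq m) + 1 / (12 * n)) atTop
      (𝓝 (Real.log (√Real.pi) + 1 / (12 * (n:ℝ)))) :=
    ((Real.continuousAt_log hpi.ne').tendsto.comp Stirling.tendsto_stirlingSeq_sqrt_pi).add_const _
  have h : Real.log (Stirling.stirlingSeq n) ≤ Real.log (√Real.pi) + 1 / (12 * (n:ℝ)) := by
    refine ge_of_tendsto hlim ?_
    filter_upwards [eventually_ge_atTop n] with m hm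
    have := hmono m hm
    have : (0:ℝ) ≤ 1 / (12 * m) := by positivity
    linarith
  have hpos : 0 < Stirling.stirlingSeq n := lt_of_lt_of_le hpi (Stirling.sqrt_pi_le_stirlingSeq (by omega))
  calc Stirling.stirlingSeq n = Real.exp (Real.log (Stirling.stirlingSeq n)) := (Real.exp_log hpos).symm
    _ ≤ Real.exp (Real.log (√Real.pi) + 1 / (12 * (n:ℝ))) := Real.exp_le_exp.2 h
    _ = _ := by rw [Real.exp_add, Real.exp_log hpi]

lemma bt_stirling (n : ℕ) (hn : 1 ≤ n) :
    |(n:ℝ) * (Stirling.stirlingSeq n / √Real.pi - 1)| ≤ 1 := by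
  have hpi : (0:ℝ) < √Real.pi := by positivity
  have h1 := Stirling.sqrt_pi_le_stirlingSeq (n := n) (by omega)
  have h2 := bt_stirling_upper n hn
  have hn' : (1:ℝ) ≤ n := by exact_mod_cast hn
  have h3 : 1 ≤ Stirling.stirlingSeq n / √Real.pi := by rwa [le_div_iff₀ hpi, one_mul]
  have h4 : Stirling.stirlingSeq n / √Real.pi ≤ Real.exp (1 / (12 * n)) := by
    rw [div_le_iff₀ hpi]; linarith
  have hx : 1 / (12 * (n:ℝ)) ≤ 1 := by
    rw [div_le_one (by positivity)]; linarith
  have h5 := Real.abs_exp_sub_one_le (x := 1 / (12 * (n:ℝ))) (by rw [abs_of_nonneg (by positivity)]; exact hx)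
  rw [abs_of_nonneg (by positivity : (0:ℝ) ≤ 1 / (12 * (n:ℝ)))] at h5
  have h6 := (le_abs_self _).trans h5
  rw [abs_of_nonneg (by apply mul_nonneg <;> linarith)]
  calc (n:ℝ) * (Stirling.stirlingSeq n / √Real.pi - 1) ≤ n * (2 * (1 / (12 * (n:ℝ)))) := by gcongr; linarith
    _ = 1/6 := by field_simp; norm_num
    _ ≤ 1 := by norm_num

lemma bt_moment (k : ℕ) : ∫ t : ℝ, t ^ (2*k) * Real.exp (-(1/2) * t^2)
    = 2 * (∫ t in Set.Ioi (0:ℝ), t ^ ((2*k : ℕ) : ℝ) * Real.exp (-(1/2) * t^(2:ℝ))) := by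
  have := integral_comp_abs (f := fun t : ℝ => t ^ (2*k) * Real.exp (-(1/2) * t^2))
  simp only [sq_abs, pow_mul] at this
  simp only [pow_mul, this, Real.rpow_natCast, Real.rpow_two]

lemma bt_rpow (k : ℕ) : ((1/2:ℝ)) ^ (-(((2*k : ℕ):ℝ) + 1) / 2) = 2^k * √2 := by
  rw [one_div, Real.inv_rpow (by norm_num), ← Real.rpow_neg (by norm_num),
    show -(-(((2*k : ℕ):ℝ) + 1) / 2) = (k:ℝ) + 1/2 by push_cast; ring,
    Real.rpow_add (by norm_num), Real.rpow_natCast, Real.sqrt_eq_rpow]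

lemma bt_moment' (k : ℕ) : ∫ t : ℝ, t ^ (2*k) * Real.exp (-(1/2) * t^2)
    = 2^k * √2 * Real.Gamma ((k:ℝ) + 1/2) := by
  rw [bt_moment, integral_rpow_mul_exp_neg_mul_rpow (by norm_num) (by linarith [Nat.cast_nonneg (α := ℝ) (2*k)]) (by norm_num), bt_rpow,
    show (((2*k : ℕ):ℝ) + 1) / 2 = (k:ℝ) + 1/2 by push_cast; ring]
  ring

lemma bt_m0 : ∫ t : ℝ, Real.exp (-(1/2) * t^2) = √(2 * Real.pi) := by
  rw [integral_gaussian]; congr 1; field_simp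

lemma bt_m4 : ∫ t : ℝ, t ^ 4 * Real.exp (-(1/2) * t^2) = 3 * √(2 * Real.pi) := by
  have := bt_moment' 2
  norm_num at this ⊢
  rw [this, show (5/2:ℝ) = 3/2 + 1 by norm_num, Real.Gamma_add_one (by norm_num),
    show (3/2:ℝ) = 1/2 + 1 by norm_num, Real.Gamma_add_one (by norm_num), Real.Gamma_one_half_eq]
  ring

lemma bt_m6 : ∫ t : ℝ, t ^ 6 * Real.exp (-(1/2) * t^2) = 15 * √(2 * Real.pi) := by
  have := bt_moment' 3
  norm_num at this ⊢
  rw [this, show (7/2:ℝ) = 5/2 + 1 by norm_num, Real.Gamma_add_one (by norm_num), show (5/2:ℝ) = 3/2 + 1 by norm_num, Real.Gamma_add_one (by norm_num),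
    show (3/2:ℝ) = 1/2 + 1 by norm_num, Real.Gamma_add_one (by norm_num), Real.Gamma_one_half_eq]
  ring

lemma bt_int (k : ℕ) {b : ℝ} (hb : 0 < b) : Integrable (fun t : ℝ => t ^ k * Real.exp (-b * t^2)) := by
  have := integrable_rpow_mul_exp_neg_mul_sq hb (s := k) (by linarith [Nat.cast_nonneg (α := ℝ) k])
  simpa only [Real.rpow_natCast] using this

lemma bt_limit_integral : ∫ t : ℝ, Real.exp (-(1/2) * t^2) * (t^4/24 - t^6/72) = - √(2 * Real.pi) / 12 := by
  have h : ∀ t : ℝ, Real.exp (-(1/2) * t^2) * (t^4/24 - t^6/72) =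
    (1/24) * (t^4 * Real.exp (-(1/2) * t^2)) - (1/72) * (t^6 * Real.exp (-(1/2) * t^2)) := by
    intro t; ring
  simp_rw [h]
  rw [integral_sub ((bt_int 4 (by norm_num)).const_mul _) ((bt_int 6 (by norm_num)).const_mul _),
    integral_const_mul, integral_const_mul, bt_m4, bt_m6]
  ring

lemma bell_succ' (n : ℕ) : Bell (n+1) = ∑ k ∈ Finset.range (n+1), n.choose k * Bell k := by
  rw [Bell, Finset.sum_attach (Finset.range (n+1)) (fun k => n.choose k * Bell k)]

noncomputable def btf (z : ℂ) : ℂ := Complex.exp (Complex.exp z - 1)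

lemma btf_contDiff {n : WithTop ℕ∞} : ContDiff ℂ n btf :=
  (Complex.contDiff_exp.sub contDiff_const).cexp

lemma btf_diff : Differentiable ℂ btf := (btf_contDiff (n := 1)).differentiable (by norm_num)

lemma btf_deriv : deriv btf = btf * Complex.exp := by
  ext z
  have := ((Complex.hasDerivAt_exp z).sub_const 1).cexp
  exact this.deriv

lemma btf_iter (n : ℕ) : iteratedDeriv n btf 0 = (Bell n : ℂ) := by
  induction n using Nat.strong_induction_on with
  | _ n ih =>
    rcases n with _ | n
    · simp [btf, Bell]
    · rw [iteratedDeriv_succ', btf_deriv, iteratedDeriv_mul btf_contDiff.contDiffAt Complex.contDiff_exp.contDiffAt, bell_succ']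
      push_cast
      refine Finset.sum_congr rfl fun k hk => ?_
      rw [ih k (by simpa using hk)]
      simp [iteratedDeriv_eq_iterate, Complex.iter_deriv_exp]

lemma bell_circle (n : ℕ) {r : ℝ} (hr : 0 < r) :
    ∮ z in C(0, r), (1 / (z - 0) ^ (n + 1)) • btf z = (2 * Real.pi * Complex.I / n.factorial) • (Bell n : ℂ) := by
  rw [btf_diff.differentiableOn.circleIntegral_one_div_sub_center_pow_smul hr n, btf_iter]

lemma bell_integral (n : ℕ) {r : ℝ} (hr : 0 < r) :
    ∫ θ in (-Real.pi)..Real.pi, btf (r * Complex.exp (θ * Complex.I)) * Complex.exp (-(n * θ * Complex.I))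
      = 2 * Real.pi * r ^ n * Bell n / n.factorial := by
  have hp : Function.Periodic (fun θ : ℝ => btf (r * Complex.exp (θ * Complex.I)) * Complex.exp (-(n * θ * Complex.I))) (2 * Real.pi) := by
    intro θ
    have h1 : Complex.exp (((θ + 2 * Real.pi : ℝ) : ℂ) * Complex.I) = Complex.exp (θ * Complex.I) := by
      push_cast; rw [add_mul]; exact Complex.exp_periodic _
    have h2 : ∀ x : ℝ, Complex.exp (-(n * x * Complex.I)) = (Complex.exp (x * Complex.I))⁻¹ ^ n := by
      intro x; rw [← Complex.exp_neg, ← Complex.exp_nat_mul]; congr 1; ring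
    simp only [h1, h2]
  have h := hp.intervalIntegral_add_eq (-Real.pi) 0
  rw [show -Real.pi + 2 * Real.pi = Real.pi by ring, zero_add] at h
  rw [h]
  have hc := bell_circle n hr
  rw [circleIntegral] at hc
  have hr' : (r:ℂ) ≠ 0 := by exact_mod_cast hr.ne'
  have : ∀ θ : ℝ, deriv (circleMap 0 r) θ • (1 / (circleMap 0 r θ - 0) ^ (n + 1)) • btf (circleMap 0 r θ)
      = Complex.I * ((r:ℂ)^n)⁻¹ * (btf (r * Complex.exp (θ * Complex.I)) * Complex.exp (-(n * θ * Complex.I))) := by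
    intro θ
    rw [deriv_circleMap, sub_zero, circleMap_zero, Complex.exp_neg, mul_assoc (n:ℂ), Complex.exp_nat_mul]
    have := Complex.exp_ne_zero (θ * Complex.I)
    simp only [smul_eq_mul]
    field_simp
    ring
  simp_rw [this] at hc
  rw [intervalIntegral.integral_const_mul] at hc
  have hI := Complex.I_ne_zero
  have hf : (n.factorial : ℂ) ≠ 0 := by exact_mod_cast n.factorial_ne_zero
  have hrn : (r:ℂ)^n ≠ 0 := pow_ne_zero _ hr'
  generalize (∫ θ in (0:ℝ)..2 * Real.pi, btf (r * Complex.exp (θ * Complex.I)) * Complex.exp (-(n * θ * Complex.I))) = X at hc ⊢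
  simp only [smul_eq_mul] at hc
  field_simp at hc ⊢
  linear_combination hc

noncomputable def btA (r : ℝ) : ℝ := (√(1 + 1 / r))⁻¹
noncomputable def btq (r : ℝ) : ℝ := btA r * Real.exp (-r / 2)
noncomputable def btP (r t : ℝ) : ℝ := Real.exp r * ((btG (1 / r) (t * btq r)).re - 1)
noncomputable def btB (r t : ℝ) : ℝ := Real.exp r * ((btG (1 / r) (t * btq r)).im - t * btq r)
noncomputable def btK (r t : ℝ) : ℝ := Real.exp (btP r t) * Real.cos (btB r t)
noncomputable def btPsi (r t : ℝ) : ℝ :=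
  Real.exp r * ((if |t * btq r| ≤ Real.pi * r then btK r t else 0) - Real.exp (-(1 / 2) * t ^ 2))

lemma btA_pos {r : ℝ} (hr : 0 < r) : 0 < btA r := by unfold btA; positivity
lemma btq_pos {r : ℝ} (hr : 0 < r) : 0 < btq r := mul_pos (btA_pos hr) (Real.exp_pos _)

lemma btA_sq {r : ℝ} (hr : 0 < r) : (1 + 1 / r) * btA r ^ 2 = 1 := by
  unfold btA
  rw [inv_pow, Real.sq_sqrt (by positivity)]
  exact mul_inv_cancel₀ (by positivity)

lemma btA_le {r : ℝ} (hr : 0 < r) : btA r ≤ 1 := by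
  have h := btA_sq hr
  have h1 := btA_pos hr
  have h2 : 0 < 1 / r := by positivity
  by_contra! hc
  nlinarith [mul_pos h2 (pow_pos h1 2)]

lemma bt_exp_half (r : ℝ) : Real.exp r = Real.exp (r/2) ^ 2 := by
  rw [← Real.exp_nat_mul]; congr 1; push_cast; ring

lemma btq_eq (r : ℝ) : btq r = btA r / Real.exp (r/2) := by
  unfold btq; rw [div_eq_mul_inv (btA r), ← Real.exp_neg]; congr 2; ring

lemma btq_sq {r : ℝ} (hr : 0 < r) : Real.exp r * ((1 + 1 / r) * btq r ^ 2) = 1 := by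
  have h := Real.exp_pos (r/2)
  have h2 : Real.exp r * ((1 + 1 / r) * btq r ^ 2) = (1 + 1 / r) * btA r ^ 2 := by
    rw [btq_eq, bt_exp_half r]
    generalize Real.exp (r/2) = M at *
    field_simp
  rw [h2, btA_sq hr]

lemma btA_tendsto : Tendsto btA atTop (𝓝 1) := by
  have h : Tendsto (fun r : ℝ => 1 + 1 / r) atTop (𝓝 (1 + 0)) := by
    simpa using (tendsto_inv_atTop_zero (𝕜 := ℝ)).const_add 1
  have := (h.sqrt).inv₀ (by simp)
  rw [add_zero, Real.sqrt_one, inv_one] at this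
  exact this

lemma bt_exphalf_tendsto : Tendsto (fun r : ℝ => (Real.exp (r/2))⁻¹) atTop (𝓝 0) :=
  (Real.tendsto_exp_atTop.comp (tendsto_id.atTop_div_const (by norm_num : (0:ℝ) < 2))).inv_tendsto_atTop

lemma bt_inv_tendsto : Tendsto (fun r : ℝ => 1 / r) atTop (𝓝 0) := by
  simpa using (tendsto_inv_atTop_zero (𝕜 := ℝ))

lemma btP_eq {r : ℝ} (hr : 0 < r) (t : ℝ) : btP r t + t^2/2 =
    Real.exp r * ((btG (1 / r) (t * btq r)).re - 1 + (1 + 1 / r) * (t * btq r)^2 / 2) := by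
  unfold btP
  linear_combination (-t^2/2) * btq_sq hr

lemma bt_of_bound {f g b : ℝ → ℝ} {l : ℝ} (hg : Tendsto g atTop (𝓝 l)) (hb : Tendsto b atTop (𝓝 0))
    (h : ∀ᶠ r in atTop, |f r - g r| ≤ b r) : Tendsto f atTop (𝓝 l) := by
  have h1 : Tendsto (fun r => f r - g r) atTop (𝓝 0) := squeeze_zero_norm' h hb
  have := h1.add hg
  simpa using this

lemma bt_LA (t : ℝ) : Tendsto (fun r => Real.exp r * (btP r t + t^2/2)) atTop (𝓝 (t^4/24)) := by
  have hA := btA_tendsto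
  have hE := bt_exphalf_tendsto
  have hi := bt_inv_tendsto
  refine bt_of_bound (g := fun r => (1+6*(1/r)+7*(1/r)^2+(1/r)^3) * (t * btA r)^4/24)
    (b := fun r => 52 * (|t| * btA r)^5 * (Real.exp (r/2))⁻¹) ?_ ?_ ?_
  · have := (((((hi.const_mul 6).const_add 1).add ((hi.pow 2).const_mul 7)).add (hi.pow 3)).mul ((hA.const_mul t).pow 4)).div_const 24
    simpa using this
  · have := (((hA.const_mul |t|).pow 5).const_mul 52).mul hE
    simpa using this
  · filter_upwards [eventually_ge_atTop 1] with r hr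
    have hr0 : 0 < r := by linarith
    have h := bt_5 (e := 1/r) (by positivity) (by rw [div_le_one hr0]; exact hr) (t * btq r)
    rw [btP_eq hr0]
    generalize (btG (1 / r) (t * btq r)).re = x at *
    have hM := Real.exp_pos (r/2)
    have hAp := btA_pos hr0
    rw [bt_exp_half r]
    rw [abs_mul, abs_of_pos (btq_pos hr0)] at h
    rw [btq_eq] at h ⊢
    have h' := mul_le_mul_of_nonneg_left h (by positivity : 0 ≤ Real.exp (r/2) ^ 4)
    rw [← abs_of_nonneg (by positivity : 0 ≤ Real.exp (r/2) ^ 4), ← abs_mul, abs_of_nonneg (by positivity : 0 ≤ Real.exp (r/2) ^ 4)] at h'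
    generalize Real.exp (r/2) = M at *
    generalize btA r = a at *
    refine le_trans (le_of_eq ?_) (h'.trans (le_of_eq ?_))
    · congr 1; field_simp
    · field_simp

lemma bt_MB (t : ℝ) : Tendsto (fun r => Real.exp (r/2) * btB r t) atTop (𝓝 (-t^3/6)) := by
  have hA := btA_tendsto
  have hE := bt_exphalf_tendsto
  have hi := bt_inv_tendsto
  refine bt_of_bound (g := fun r => -((1+3*(1/r)+(1/r)^2) * (t * btA r)^3/6))
    (b := fun r => 15 * (|t| * btA r)^4 * (Real.exp (r/2))⁻¹) ?_ ?_ ?_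
  · have := (((((hi.const_mul 3).const_add 1).add ((hi.pow 2))).mul ((hA.const_mul t).pow 3)).div_const 6).neg
    simpa [neg_div] using this
  · have := (((hA.const_mul |t|).pow 4).const_mul 15).mul hE
    simpa using this
  · filter_upwards [eventually_ge_atTop 1] with r hr
    have hr0 : 0 < r := by linarith
    have h := (bt_4 (e := 1/r) (by positivity) (by rw [div_le_one hr0]; exact hr) (t * btq r)).2
    unfold btB
    generalize (btG (1 / r) (t * btq r)).im = x at *
    have hM := Real.exp_pos (r/2)
    have hAp := btA_pos hr0
    rw [bt_exp_half r]
    rw [abs_mul, abs_of_pos (btq_pos hr0)] at h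
    rw [btq_eq] at h ⊢
    have h' := mul_le_mul_of_nonneg_left h (by positivity : 0 ≤ Real.exp (r/2) ^ 3)
    rw [← abs_of_nonneg (by positivity : 0 ≤ Real.exp (r/2) ^ 3), ← abs_mul, abs_of_nonneg (by positivity : 0 ≤ Real.exp (r/2) ^ 3)] at h'
    generalize Real.exp (r/2) = M at *
    generalize btA r = a at *
    refine le_trans (le_of_eq ?_) (h'.trans (le_of_eq ?_))
    · congr 1; field_simp; ring
    · field_simp

lemma bt_pointwise (t : ℝ) : Tendsto (fun r => btPsi r t) atTop
    (𝓝 (Real.exp (-(1/2) * t^2) * (t^4/24 - t^6/72))) := by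
  have hLA := bt_LA t
  have hMB := bt_MB t
  have hE := bt_exphalf_tendsto
  have hA0 : Tendsto (fun r => btP r t + t^2/2) atTop (𝓝 0) := by
    have := (hLA.mul hE).mul hE
    rw [mul_zero] at this
    refine this.congr fun r => ?_
    rw [bt_exp_half r]; have := Real.exp_pos (r/2); field_simp
  have hB0 : Tendsto (fun r => btB r t) atTop (𝓝 0) := by
    have := hMB.mul hE
    rw [mul_zero] at this
    refine this.congr fun r => ?_
    have := Real.exp_pos (r/2); field_simp
  have hLB : Tendsto (fun r => Real.exp r * (btB r t)^2) atTop (𝓝 (t^6/36)) := by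
    have := hMB.pow 2
    rw [show (-t^3/6)^2 = t^6/36 by ring] at this
    refine this.congr fun r => ?_
    rw [bt_exp_half r]; ring
  have hds : Tendsto (fun r => dslope Real.exp 0 (btP r t + t^2/2)) atTop (𝓝 1) := by
    have hc : ContinuousAt (dslope Real.exp 0) 0 :=
      continuousAt_dslope_same.2 Real.differentiableAt_exp
    have := hc.tendsto.comp hA0
    simpa using! this
  have hsc : Tendsto (fun r => Real.sinc (btB r t / 2)) atTop (𝓝 1) := by
    have := (Real.continuous_sinc.tendsto 0).comp (by simpa using hB0.div_const 2 : Tendsto (fun r => btB r t / 2) atTop (𝓝 0))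
    simpa using! this
  have hcos : Tendsto (fun r => Real.cos (btB r t)) atTop (𝓝 1) := by
    have := (Real.continuous_cos.tendsto 0).comp hB0
    simpa using! this
  have main := (((hLA.mul hds).mul hcos).sub ((hLB.mul (hsc.pow 2)).div_const 2)).const_mul (Real.exp (-(1/2) * t^2))
  rw [show (t^4/24 * 1 * 1 - t^6/36 * 1^2/2) = t^4/24 - t^6/72 by ring] at main
  refine main.congr' ?_
  filter_upwards [eventually_ge_atTop (max 1 |t|)] with r hr
  have hr1 : 1 ≤ r := (le_max_left _ _).trans hr
  have hrt : |t| ≤ r := (le_max_right _ _).trans hr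
  have hr0 : 0 < r := by linarith
  have hq1 : btq r ≤ 1 := by
    unfold btq
    have : Real.exp (-r/2) ≤ 1 := Real.exp_le_one_iff.2 (by linarith)
    exact mul_le_one₀ (btA_le hr0) (Real.exp_pos _).le this
  have hind : |t * btq r| ≤ Real.pi * r := by
    rw [abs_mul, abs_of_pos (btq_pos hr0)]
    have := Real.pi_gt_three
    have := abs_nonneg t
    nlinarith [btq_pos hr0]
  unfold btPsi btK
  rw [if_pos hind]
  set a := btP r t + t^2/2 with ha
  have hP : btP r t = -(1/2)*t^2 + a := by rw [ha]; ring
  set b := btB r t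
  have h1 : Real.exp a - 1 = a * dslope Real.exp 0 a := by
    have := sub_smul_dslope Real.exp 0 a
    simp only [sub_zero, smul_eq_mul, Real.exp_zero] at this
    exact this.symm
  have h2 : Real.cos b - 1 = - (b^2 * Real.sinc (b/2)^2 / 2) := by
    have h3 : b/2 * Real.sinc (b/2) = Real.sin (b/2) := by
      by_cases hb : b / 2 = 0
      · simp [hb]
      · rw [Real.sinc_of_ne_zero hb, mul_div_cancel₀ _ hb]
    have h4 : Real.cos b = 1 - 2 * Real.sin (b/2)^2 := by
      have := Real.cos_two_mul (b/2)
      rw [Real.cos_sq', show 2*(b/2) = b by ring] at this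
      linarith
    rw [h4, ← h3]; ring
  rw [hP, Real.exp_add]
  linear_combination (-(Real.exp r * Real.exp (-(1/2)*t^2) * Real.cos b)) * h1 - (Real.exp r * Real.exp (-(1/2)*t^2)) * h2

lemma bt_eventual : ∀ᶠ r : ℝ in atTop,
    Real.exp r * Real.exp (-(Real.exp r / (321 * r))) * (1 + 20 * r^2 * Real.exp r) ≤ 1 := by
  have h := (Real.tendsto_pow_mul_exp_neg_atTop_nhds_zero 5).const_mul (6 * 321^3 * 21)
  rw [mul_zero] at h
  filter_upwards [h.eventually_lt_const one_pos, eventually_ge_atTop 1] with r hr hr1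
  have hr0 : 0 < r := by linarith
  have hL1 : 1 ≤ Real.exp r := Real.one_le_exp hr0.le
  have hx : 0 < Real.exp r / (321 * r) := by positivity
  have h3 := Real.pow_div_factorial_le_exp _ hx.le 3
  rw [Real.exp_neg] at hr ⊢
  have h4 : (Real.exp (Real.exp r / (321 * r)))⁻¹ ≤ ((Real.exp r / (321 * r))^3 / (Nat.factorial 3 : ℝ))⁻¹ :=
    inv_anti₀ (by positivity) h3
  have h5 : 1 + 20 * r^2 * Real.exp r ≤ 21 * r^2 * Real.exp r := by
    nlinarith [one_le_pow₀ (n := 2) hr1]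
  have hf : (Nat.factorial 3 : ℝ) = 6 := by norm_num [Nat.factorial]
  rw [hf] at h4
  generalize Real.exp r = L at *
  calc L * (Real.exp (L / (321 * r)))⁻¹ * (1 + 20 * r^2 * L)
      ≤ L * ((L / (321 * r))^3 / 6)⁻¹ * (21 * r^2 * L) := by gcongr
    _ = 6 * 321^3 * 21 * (r^5 * L⁻¹) := by field_simp
    _ ≤ 1 := hr.le

lemma bt_tail {r : ℝ} (hr : 1 ≤ r) {t : ℝ} (h1 : 1/8 < |t * btq r|) (h2 : |t * btq r| ≤ Real.pi * r)
    (hev : Real.exp r * Real.exp (-(Real.exp r / (321 * r))) * (1 + 20 * r^2 * Real.exp r) ≤ 1) :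
    Real.exp r * |btK r t| ≤ (1 + t^2)⁻¹ := by
  have hr0 : 0 < r := by linarith
  have hpi := Real.pi_gt_three
  have hpi2 : Real.pi^2 < 10 := by nlinarith [Real.pi_lt_d2, Real.pi_pos]
  have hK : |btK r t| ≤ Real.exp (btP r t) := by
    unfold btK
    rw [abs_mul, abs_of_pos (Real.exp_pos _)]
    exact mul_le_of_le_one_right (Real.exp_pos _).le (Real.abs_cos_le_one _)
  have hqs := btq_sq hr0
  have hP : btP r t ≤ -(Real.exp r / (321 * r)) := by
    unfold btP
    set s := t * btq r with hs
    have hn : (btG (1/r) s).re ≤ ‖btG (1/r) s‖ := Complex.re_le_norm _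
    rw [btG_norm] at hn
    have hc := Real.cos_le_one_sub_mul_cos_sq (x := 1/r * s) (by
      rw [abs_mul, abs_of_pos (by positivity)]
      rw [one_div, inv_mul_le_iff₀ hr0]; linarith)
    have hss : 1/64 < s^2 := by
      rw [← sq_abs]; nlinarith
    have h3 : (Real.cos (1/r*s) - 1) / (1/r) ≤ -(1/(320*r)) := by
      have h4 : (Real.cos (1/r*s) - 1) / (1/r) ≤ -(2 / Real.pi^2 * (s^2 / r)) := by
        rw [div_le_iff₀ (by positivity)]
        refine le_trans (sub_le_sub_right hc 1) (le_of_eq ?_)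
        field_simp; ring
      refine h4.trans (neg_le_neg ?_)
      have h5 : 2/10 ≤ 2 / Real.pi^2 := by gcongr
      calc 1/(320*r) = 2/10 * ((1/64)/r) := by field_simp; norm_num
        _ ≤ 2 / Real.pi^2 * (s^2 / r) := by gcongr
    have h6 := hn.trans (Real.exp_le_exp.2 h3)
    have h7 : Real.exp (-(1/(320*r))) ≤ 1 - 1/(321*r) := by
      rw [Real.exp_neg]
      have h8 := Real.add_one_le_exp (1/(320*r))
      have h9 : (Real.exp (1/(320*r)))⁻¹ ≤ (1/(320*r)+1)⁻¹ := inv_anti₀ (by positivity) h8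
      refine h9.trans ?_
      rw [inv_le_iff_one_le_mul₀ (by positivity)]
      have : (1 - 1/(321*r)) * (1/(320*r)+1) - 1 = (r - 1) / (321 * 320 * r^2) := by
        field_simp; ring
      have : 0 ≤ (r - 1) / (321 * 320 * r^2) := div_nonneg (by linarith) (by positivity)
      linarith
    calc Real.exp r * ((btG (1/r) s).re - 1) ≤ Real.exp r * (-(1/(321*r))) := by
          gcongr; linarith
      _ = _ := by ring
  have ht : t^2 ≤ 20 * r^2 * Real.exp r := by
    have hs2 : (t * btq r)^2 ≤ (Real.pi * r)^2 := by rw [← sq_abs]; gcongr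
    have hi : 1/r ≤ 1 := by rw [div_le_one hr0]; exact hr
    calc t^2 = Real.exp r * ((1+1/r) * (t * btq r)^2) := by linear_combination (-t^2) * hqs
      _ ≤ Real.exp r * ((1+1) * (Real.pi*r)^2) := by gcongr
      _ ≤ Real.exp r * ((1+1) * (10 * r^2)) := by rw [mul_pow]; gcongr
      _ = _ := by ring
  rw [← one_div, le_div_iff₀ (by positivity)]
  calc Real.exp r * |btK r t| * (1 + t^2)
     ≤ Real.exp r * Real.exp (-(Real.exp r / (321 * r))) * (1 + 20 * r^2 * Real.exp r) := by
        gcongr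
        exact hK.trans (Real.exp_le_exp.2 hP)
    _ ≤ 1 := hev

lemma bt_exp_sub_one (x : ℝ) : |Real.exp x - 1| ≤ |x| * Real.exp |x| := by
  rcases le_total 0 x with h | h
  · rw [abs_of_nonneg h, abs_of_nonneg (by linarith [Real.one_le_exp h])]
    have := Real.add_one_le_exp (-x)
    have h2 : Real.exp x * Real.exp (-x) = 1 := by rw [← Real.exp_add]; simp
    nlinarith [Real.exp_pos x]
  · rw [abs_of_nonpos h, abs_of_nonpos (by linarith [Real.exp_le_one_iff.2 h])]
    have := Real.add_one_le_exp x
    have h2 : 1 ≤ Real.exp (-x) := Real.one_le_exp (by linarith)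
    nlinarith

lemma bt_center {r : ℝ} (hr : 1 ≤ r) {t : ℝ} (h1 : |t * btq r| ≤ 1/8) :
    |Real.exp r * (btK r t - Real.exp (-(1/2)*t^2))| ≤ Real.exp (-(1/4)*t^2) * (15 * t^4 + 13 * t^6) := by
  have hr0 : 0 < r := by linarith
  have he0 : 0 < 1/r := by positivity
  have he1 : 1/r ≤ 1 := by rw [div_le_one hr0]; exact hr
  have hqs := btq_sq hr0
  have hL := Real.exp_pos r
  have hP := btP_eq hr0 t
  have h4 := (bt_4 he0 he1 (t * btq r)).1
  have h3 := bt_im3 he0 he1 (t * btq r)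
  set s := t * btq r with hs
  set L := Real.exp r with hLdef
  set a := btP r t + t^2/2 with ha
  set b := btB r t with hb
  have hts : t^2 = L * ((1+1/r) * s^2) := by rw [hs]; linear_combination (-t^2) * hqs
  have hsl : L * s^2 ≤ t^2 := by
    rw [hts]; gcongr; nlinarith [sq_nonneg s]
  have hs2 : s^2 ≤ 1/64 := by
    rw [← sq_abs]; nlinarith [abs_nonneg s]
  have hs4 : |s|^4 = s^2 * s^2 := by rw [show |s|^4 = (|s|^2)^2 by ring, sq_abs]; ring
  have haA : |a| ≤ L * (15 * (s^2*s^2)) := by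
    rw [hP, abs_mul, abs_of_pos hL, ← hs4]; gcongr
  have ha1 : |a| ≤ t^2/4 := by
    nlinarith [sq_nonneg s, mul_nonneg hL.le (sq_nonneg s)]
  have ha2 : L * |a| ≤ 15 * t^4 := by
    calc L * |a| ≤ L * (L * (15 * (s^2*s^2))) := by gcongr
      _ = 15 * (L*s^2)^2 := by ring
      _ ≤ 15 * (t^2)^2 := by gcongr
      _ = _ := by ring
  have hbB : |b| ≤ L * (5 * |s|^3) := by
    rw [hb, btB, abs_mul, abs_of_pos hL]; gcongr
  have hb2 : L * b^2 ≤ 25 * t^6 := by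
    calc L * b^2 = L * |b|^2 := by rw [sq_abs]
      _ ≤ L * (L * (5 * |s|^3))^2 := by gcongr
      _ = 25 * (L * |s|^2)^3 := by ring
      _ = 25 * (L * s^2)^3 := by rw [sq_abs]
      _ ≤ 25 * (t^2)^3 := by gcongr
      _ = _ := by ring
  have hcos : |Real.cos b - 1| ≤ b^2/2 := by
    rw [abs_of_nonpos (by linarith [Real.cos_le_one b])]
    linarith [Real.one_sub_sq_div_two_le_cos (x := b)]
  have hea : Real.exp |a| ≤ Real.exp (t^2/4) := Real.exp_le_exp.2 ha1
  have hea' : Real.exp a ≤ Real.exp (t^2/4) := Real.exp_le_exp.2 ((le_abs_self a).trans ha1)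
  have hk : L * (btK r t - Real.exp (-(1/2)*t^2)) = Real.exp (-(1/2)*t^2) * (L * (Real.exp a - 1) + Real.exp a * (L * (Real.cos b - 1))) := by
    have : btP r t = -(1/2)*t^2 + a := by rw [ha]; ring
    unfold btK
    rw [this, Real.exp_add]; ring
  rw [hk, abs_mul, abs_of_pos (Real.exp_pos _)]
  have hfin : |L * (Real.exp a - 1) + Real.exp a * (L * (Real.cos b - 1))| ≤ Real.exp (t^2/4) * (15*t^4 + 13*t^6) := by
    refine (abs_add_le _ _).trans ?_
    rw [abs_mul, abs_mul, abs_mul, abs_of_pos hL, abs_of_pos (Real.exp_pos a)]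
    have e1 : L * |Real.exp a - 1| ≤ Real.exp (t^2/4) * (15 * t^4) := by
      calc L * |Real.exp a - 1| ≤ L * (|a| * Real.exp |a|) := by gcongr; exact bt_exp_sub_one a
        _ = Real.exp |a| * (L * |a|) := by ring
        _ ≤ _ := by gcongr
    have e2 : Real.exp a * (L * |Real.cos b - 1|) ≤ Real.exp (t^2/4) * (13 * t^6) := by
      have : L * |Real.cos b - 1| ≤ 13 * t^6 := by
        have : L * |Real.cos b - 1| ≤ L * (b^2/2) := by gcongr
        have : 0 ≤ t^6 := by positivity
        linarith
      gcongr
    linarith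
  calc _ ≤ Real.exp (-(1/2)*t^2) * (Real.exp (t^2/4) * (15*t^4 + 13*t^6)) := by gcongr
    _ = _ := by rw [← mul_assoc, ← Real.exp_add]; congr 2; ring

lemma bt_dom : ∀ᶠ r : ℝ in atTop, ∀ t : ℝ,
    ‖btPsi r t‖ ≤ Real.exp (-(1/4)*t^2) * (15 * t^4 + 13 * t^6 + 64 * t^2) + (1 + t^2)⁻¹ := by
  filter_upwards [bt_eventual, eventually_ge_atTop 1] with r hev hr t
  have hr0 : 0 < r := by linarith
  have hpi := Real.pi_gt_three
  have hi : 0 < (1 + t^2)⁻¹ := by positivity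
  have hx := Real.exp_pos (-(1/4)*t^2)
  rw [Real.norm_eq_abs]
  unfold btPsi
  by_cases h1 : |t * btq r| ≤ 1/8
  · rw [if_pos (by nlinarith)]
    refine (bt_center hr h1).trans ?_
    have : 0 ≤ Real.exp (-(1/4)*t^2) * (64 * t^2) := by positivity
    linarith
  · push Not at h1
    have hg : Real.exp r * Real.exp (-(1/2)*t^2) ≤ Real.exp (-(1/4)*t^2) * (64 * t^2) := by
      have hL : Real.exp r ≤ 64 * t^2 := by
        have hqs := btq_sq hr0
        have : (1/8)^2 < (t * btq r)^2 := by rw [← sq_abs (t * btq r)]; gcongr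
        have h2 : t^2 = Real.exp r * ((1+1/r) * (t * btq r)^2) := by linear_combination (-t^2) * hqs
        have h3 : Real.exp r * (1 * (1/8)^2) ≤ Real.exp r * ((1+1/r) * (t * btq r)^2) := by
          gcongr; linarith [show 0 < 1/r by positivity]
        linarith
      have he : Real.exp (-(1/2)*t^2) ≤ Real.exp (-(1/4)*t^2) := Real.exp_le_exp.2 (by nlinarith [sq_nonneg t])
      calc _ ≤ (64 * t^2) * Real.exp (-(1/4)*t^2) := by gcongr
        _ = _ := by ring
    have hpos : 0 ≤ Real.exp (-(1/4)*t^2) * (15 * t^4 + 13 * t^6) := by positivity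
    have hgp : 0 < Real.exp r * Real.exp (-(1/2)*t^2) := by positivity
    split_ifs with h2
    · have ht := bt_tail hr h1 h2 hev
      rw [mul_sub]
      refine (abs_sub _ _).trans ?_
      rw [abs_mul, abs_of_pos (Real.exp_pos r), abs_of_pos hgp]
      linarith
    · rw [zero_sub, mul_neg, abs_neg, abs_of_pos hgp]
      linarith

lemma btG_cont (e : ℝ) : Continuous (btG e) := by unfold btG btE; fun_prop

lemma btK_cont (r : ℝ) : Continuous (btK r) := by
  have h : Continuous fun t => btG (1/r) (t * btq r) := (btG_cont _).comp (continuous_id.mul continuous_const)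
  have h1 := Complex.continuous_re.comp h
  have h2 := Complex.continuous_im.comp h
  unfold btK btP btB
  simp only [Function.comp_def] at h1 h2
  fun_prop

lemma btPsi_meas (r : ℝ) : Measurable (btPsi r) := by
  unfold btPsi
  refine Measurable.const_mul (Measurable.sub (Measurable.ite ?_ (btK_cont r).measurable measurable_const) (by fun_prop)) _
  exact measurableSet_le (by fun_prop) measurable_const

lemma bt_dct : Tendsto (fun r => ∫ t, btPsi r t) atTop (𝓝 (- √(2 * Real.pi) / 12)) := by
  rw [← bt_limit_integral]
  refine tendsto_integral_filter_of_dominated_convergence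
    (fun t => Real.exp (-(1/4)*t^2) * (15 * t^4 + 13 * t^6 + 64 * t^2) + (1 + t^2)⁻¹) ?_ ?_ ?_ ?_
  · exact Eventually.of_forall fun r => (btPsi_meas r).aestronglyMeasurable
  · exact bt_dom.mono fun r h => Eventually.of_forall h
  · refine Integrable.add ?_ integrable_inv_one_add_sq
    have := (((bt_int 4 (b := 1/4) (by norm_num)).const_mul 15).add ((bt_int 6 (b := 1/4) (by norm_num)).const_mul 13)).add
      ((bt_int 2 (b := 1/4) (by norm_num)).const_mul 64)
    refine this.congr (Eventually.of_forall fun t => ?_)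
    simp only [Pi.add_apply]; ring
  · exact Eventually.of_forall bt_pointwise

noncomputable def btJ (r : ℝ) : ℝ := ∫ t in (-(Real.pi * r / btq r))..(Real.pi * r / btq r), btK r t

lemma bt_int_psi {r : ℝ} (hr : 0 < r) : ∫ t, btPsi r t = Real.exp r * (btJ r - √(2 * Real.pi)) := by
  have hq := btq_pos hr
  have hR : 0 ≤ Real.pi * r / btq r := by positivity
  have h1 : ∀ t, (if |t * btq r| ≤ Real.pi * r then btK r t else 0) =
      Set.indicator (Set.Icc (-(Real.pi * r / btq r)) (Real.pi * r / btq r)) (btK r) t := by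
    intro t
    rw [Set.indicator_apply]
    congr 1
    rw [abs_mul, abs_of_pos hq, ← le_div_iff₀ hq, abs_le, Set.mem_Icc]
  unfold btPsi
  simp_rw [h1]
  rw [integral_const_mul, integral_sub, bt_m0, integral_indicator measurableSet_Icc, integral_Icc_eq_integral_Ioc,
    ← intervalIntegral.integral_of_le (by linarith)]
  · rfl
  · exact ((btK_cont r).continuousOn.integrableOn_Icc).integrable_indicator measurableSet_Icc
  · simpa using bt_int 0 (b := 1/2) (by norm_num)

lemma btJ_tendsto : Tendsto (fun r => Real.exp r * (btJ r / √(2 * Real.pi) - 1)) atTop (𝓝 (-1/12)) := by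
  have hp : 0 < √(2 * Real.pi) := by positivity
  have h := bt_dct.div_const (√(2 * Real.pi))
  rw [show - √(2 * Real.pi) / 12 / √(2 * Real.pi) = -1/12 by field_simp] at h
  refine h.congr' ?_
  filter_upwards [eventually_gt_atTop 0] with r hr
  rw [bt_int_psi hr]
  field_simp

lemma btJ_tendsto_one : Tendsto (fun r => btJ r / √(2 * Real.pi)) atTop (𝓝 1) := by
  have h := btJ_tendsto.mul (Real.tendsto_exp_atTop.inv_tendsto_atTop)
  have h2 := h.add_const 1
  rw [mul_zero, zero_add] at h2
  refine h2.congr fun r => ?_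
  have := Real.exp_pos r
  simp only [Pi.inv_apply]
  field_simp
  ring

lemma bt_bell {r : ℝ} (hr : 0 < r) (n : ℕ) (hn : r * Real.exp r = n) :
    2 * Real.pi * r ^ n * Bell n / n.factorial = Real.exp (Real.exp r - 1) * (btq r / r * btJ r) := by
  have hq := btq_pos hr
  set k : ℝ → ℝ := fun θ => Real.exp (Real.exp r * ((btG (1 / r) (r * θ)).re - 1)) *
    Real.cos (Real.exp r * ((btG (1 / r) (r * θ)).im - r * θ)) with hk
  have h1 : btq r / r * btJ r = ∫ θ in (-Real.pi)..Real.pi, k θ := by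
    have : ∀ t, btK r t = k (t * (btq r / r)) := by
      intro t
      simp only [hk, btK, btP, btB]
      rw [show r * (t * (btq r / r)) = t * btq r by field_simp]
    unfold btJ
    simp_rw [this]
    rw [intervalIntegral.integral_comp_mul_right k (by positivity : btq r / r ≠ 0), smul_eq_mul,
      mul_inv_cancel_left₀ (by positivity)]
    congr 1 <;> field_simp
  have h2 := bell_integral n hr
  have hint : ∀ θ : ℝ, (btf (r * Complex.exp (θ * Complex.I)) * Complex.exp (-(n * θ * Complex.I))).re
      = Real.exp (Real.exp r - 1) * k θ := by
    intro θ
    have hr' : (r:ℂ) ≠ 0 := by exact_mod_cast hr.ne'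
    have hG : btG (1/r) (r * θ) = Complex.exp (r * Complex.exp (θ * Complex.I) - r) := by
      unfold btG btE
      rw [show 1/r * (r * θ) = θ by field_simp, mul_comm Complex.I]
      congr 1
      push_cast
      field_simp
    have hz : btf (r * Complex.exp (θ * Complex.I)) * Complex.exp (-(n * θ * Complex.I)) =
       Complex.exp (((Real.exp r - 1 : ℝ) : ℂ) + ((Real.exp r : ℝ) : ℂ) * (btG (1/r) (r * θ) - 1 - ((r * θ : ℝ) : ℂ) * Complex.I)) := by
      rw [hG, btf, ← Complex.exp_add]
      congr 1
      have hn' : (n:ℂ) = r * Complex.exp r := by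
        have : ((r * Real.exp r : ℝ) : ℂ) = ((n : ℝ) : ℂ) := by rw [hn]
        push_cast at this; exact this.symm
      have hee : Complex.exp (r * Complex.exp (θ * Complex.I)) = Complex.exp r * Complex.exp (r * Complex.exp (θ * Complex.I) - r) := by
        rw [← Complex.exp_add]; congr 1; ring
      rw [hn', hee]
      push_cast
      ring
    rw [hz, Complex.exp_add, ← Complex.ofReal_exp, Complex.re_ofReal_mul, Complex.exp_re]
    simp only [hk, Complex.re_ofReal_mul, Complex.im_ofReal_mul, Complex.sub_re, Complex.sub_im, Complex.one_re, Complex.one_im, Complex.I_re, Complex.I_im]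
    congr 3 <;> ring_nf
  have h3 : (∫ θ in (-Real.pi)..Real.pi, btf (r * Complex.exp (θ * Complex.I)) * Complex.exp (-(n * θ * Complex.I))).re
     = ∫ θ in (-Real.pi)..Real.pi, Real.exp (Real.exp r - 1) * k θ := by
    have hc : Continuous fun θ : ℝ => btf (r * Complex.exp (θ * Complex.I)) * Complex.exp (-(n * θ * Complex.I)) := by
      have := btf_diff.continuous
      fun_prop
    have := Complex.reCLM.intervalIntegral_comp_comm (hc.intervalIntegrable (μ := volume) (-Real.pi) Real.pi)
    simp only [Complex.reCLM_apply] at this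
    rw [← this]
    simp_rw [hint]
  rw [h1, ← intervalIntegral.integral_const_mul, ← h3, h2]
  have : (2 * Real.pi * r ^ n * Bell n / n.factorial : ℂ) = ((2 * Real.pi * r ^ n * Bell n / n.factorial : ℝ) : ℂ) := by
    push_cast; ring
  rw [this, Complex.ofReal_re]

lemma lambertW_spec (n : ℕ) : lambertW n * Real.exp (lambertW n) = n := by
  have : ∃ y : ℝ, (fun y : ℝ => y * Real.exp y) y = (n:ℝ) := by
    have hn : (0:ℝ) ≤ n := Nat.cast_nonneg n
    have hc : ContinuousOn (fun y : ℝ => y * Real.exp y) (Set.Icc 0 n) := by fun_prop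
    have := intermediate_value_Icc hn hc
    obtain ⟨y, _, hy⟩ := this (show (n:ℝ) ∈ Set.Icc _ _ from ⟨by simpa using hn, by
      have := Real.one_le_exp hn
      nlinarith⟩)
    exact ⟨y, hy⟩
  exact Function.invFun_eq this

lemma lambertW_pos {n : ℕ} (hn : 1 ≤ n) : 0 < lambertW n := by
  have h := lambertW_spec n
  have : (0:ℝ) < n := by exact_mod_cast hn
  rw [← h] at this
  exact pos_of_mul_pos_left this (Real.exp_pos _).le

lemma lambertW_tendsto : Tendsto (fun n : ℕ => lambertW n) atTop atTop := by
  rw [tendsto_atTop]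
  intro C
  filter_upwards [eventually_ge_atTop 1, (tendsto_natCast_atTop_atTop (R := ℝ)).eventually_gt_atTop (C * Real.exp C)] with n hn h
  have hp := lambertW_pos hn
  rw [← lambertW_spec n] at h
  by_contra! hc
  have hC : 0 ≤ C := hp.le.trans hc.le
  have : lambertW n * Real.exp (lambertW n) ≤ C * Real.exp C := by gcongr
  linarith

lemma bt_ratio {n : ℕ} (hn : 1 ≤ n) : (Bell n : ℝ) / Estar n =
    (Stirling.stirlingSeq n / √Real.pi) * (btJ (lambertW n) / √(2 * Real.pi)) := by
  have hr := lambertW_pos hn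
  have hW := lambertW_spec n
  unfold Estar
  set r := lambertW n with hrdef
  have hB := bt_bell hr n hW
  have hn0 : (0:ℝ) < n := by exact_mod_cast hn
  have hf : (0:ℝ) < n.factorial := by exact_mod_cast n.factorial_pos
  have hpi := Real.pi_pos
  have hB' : (Bell n : ℝ) = n.factorial / (2 * Real.pi * r^n) * (Real.exp (Real.exp r - 1) * (btq r / r * btJ r)) := by
    rw [← hB]; field_simp
  rw [hB', Stirling.stirlingSeq]
  have hq : btq r = √r / (√(1+r) * Real.exp (r/2)) := by
    rw [btq_eq, btA, show 1 + 1/r = (1+r)/r by field_simp; ring, Real.sqrt_div (by positivity)]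
    field_simp
  have hE : Real.exp (Real.exp r + n * r - (n+1)) = Real.exp (Real.exp r - 1) * (Real.exp r)^n / (Real.exp 1)^n := by
    rw [← Real.exp_nat_mul, ← Real.exp_nat_mul, ← Real.exp_add, ← Real.exp_sub]; congr 1; ring
  have hs1 : √(2 * (n:ℝ)) = √2 * (√r * Real.exp (r/2)) := by
    rw [← hW, Real.sqrt_mul (by norm_num), Real.sqrt_mul hr.le, bt_exp_half r, Real.sqrt_sq (Real.exp_pos _).le]
  have hs2 : √(2 * Real.pi) = √2 * √Real.pi := Real.sqrt_mul (by norm_num) _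
  have hnn : ((n:ℝ) / Real.exp 1)^n = r^n * (Real.exp r)^n / (Real.exp 1)^n := by
    rw [div_pow, ← mul_pow, hW]
  rw [hq, hE, hs1, hs2, hnn]
  have hh2 : √2 * √2 = (2:ℝ) := Real.mul_self_sqrt (by norm_num)
  have hhp : √Real.pi * √Real.pi = Real.pi := Real.mul_self_sqrt hpi.le
  have hhr : √r * √r = r := Real.mul_self_sqrt hr.le
  have p1 : 0 < √(2:ℝ) := by positivity
  have p2 : 0 < √Real.pi := by positivity
  have p3 : 0 < √r := by positivity
  have p4 : 0 < √(1+r) := by positivity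
  have p5 := Real.exp_pos (r/2)
  have p6 := pow_pos (Real.exp_pos r) n
  have p7 := pow_pos (Real.exp_pos 1) n
  have p8 := pow_pos hr n
  have p9 := Real.exp_pos (Real.exp r - 1)
  generalize √(2:ℝ) = u at *
  generalize √Real.pi = v at *
  generalize √r = w at *
  generalize √(1+r) = x at *
  generalize Real.exp (r/2) = y at *
  generalize Real.exp r ^ n = z at *
  generalize Real.exp 1 ^ n = z' at *
  generalize Real.exp (Real.exp r - 1) = z'' at *
  generalize r ^ n = m at *
  generalize btJ r = J at *
  generalize (n.factorial : ℝ) = F at *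
  rw [← hh2, ← hhp]
  have : w / (x*y) / r = 1 / (x * y * w) := by rw [← hhr]; field_simp
  rw [this]
  field_simp

theorem stmt_5 :
    Filter.Tendsto (fun n : ℕ => ((n : ℝ) / Real.log n) * ((Bell n : ℝ) / Estar n - 1))
      Filter.atTop (nhds (-1 / 12)) := by
  have hW := lambertW_tendsto
  have hlog : Tendsto (fun n : ℕ => (Real.log n)⁻¹) atTop (𝓝 0) :=
    (Real.tendsto_log_atTop.comp tendsto_natCast_atTop_atTop).inv_tendsto_atTop
  have h1 : Tendsto (fun n : ℕ => (Real.log n)⁻¹ * ((n:ℝ) * (Stirling.stirlingSeq n / √Real.pi - 1))) atTop (𝓝 0) := by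
    have hln : Tendsto (fun n : ℕ => ‖(Real.log n)⁻¹‖) atTop (𝓝 0) := by simpa using hlog.norm
    refine squeeze_zero_norm' ?_ hln
    filter_upwards [eventually_ge_atTop 1] with n hn
    rw [norm_mul]
    exact mul_le_of_le_one_right (norm_nonneg _) (bt_stirling n hn)
  have h2 := btJ_tendsto_one.comp hW
  have h3 := btJ_tendsto.comp hW
  have h4 : Tendsto (fun n : ℕ => lambertW n / Real.log n) atTop (𝓝 1) := by
    have hl : Tendsto (fun r : ℝ => (1 + Real.log r / r)⁻¹) atTop (𝓝 1) := by
      have := Real.isLittleO_log_id_atTop.tendsto_div_nhds_zero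
      have := (this.const_add 1).inv₀ (by norm_num)
      simpa using this
    refine (hl.comp hW).congr' ?_
    filter_upwards [eventually_ge_atTop 1] with n hn
    have hp := lambertW_pos hn
    have : Real.log n = Real.log (lambertW n) + lambertW n := by
      conv_lhs => rw [← lambertW_spec n]
      rw [Real.log_mul hp.ne' (Real.exp_pos _).ne', Real.log_exp]
    rw [this]
    simp only [Function.comp]
    rw [← inv_div]
    congr 1
    field_simp
    ring
  have h5 := (h1.mul h2).add (h4.mul h3)
  rw [zero_mul, zero_add, one_mul] at h5
  refine h5.congr' ?_
  filter_upwards [eventually_ge_atTop 1] with n hn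
  rw [bt_ratio hn]
  simp only [Function.comp]
  have hs := lambertW_spec n
  set r := lambertW n
  set S := Stirling.stirlingSeq n / √Real.pi
  set Q := btJ r / √(2 * Real.pi)
  calc _ = (Real.log n)⁻¹ * (n * (S-1) * Q + (r * Real.exp r) * (Q - 1)) := by ring
    _ = _ := by rw [hs]; ring
end

section
/- For every integer n ≥ 2, one has ((1/e)·n/ln n)^n ≤ B_n ≤ ((3/4)·n/ln n)^n. -/
theorem Bell_succ' (n : ℕ) :
    Bell (n + 1) = ∑ k ∈ Finset.range (n + 1), n.choose k * Bell k := by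
  rw [Bell, Finset.sum_attach (Finset.range (n+1)) (fun k => n.choose k * Bell k)]

theorem dobinski (n : ℕ) :
    HasSum (fun k : ℕ => (k : ℝ) ^ n / (k.factorial : ℝ)) (Real.exp 1 * Bell n) := by
  induction n using Nat.strong_induction_on with
  | _ n ih =>
    cases n with
    | zero =>
      have h := NormedSpace.expSeries_div_hasSum_exp (1 : ℝ)
      rw [← Real.exp_eq_exp_ℝ] at h
      simpa [Bell] using h
    | succ n =>
      have h : HasSum (fun k : ℕ => ∑ j ∈ Finset.range (n + 1),
          (n.choose j : ℝ) * ((k : ℝ) ^ j / (k.factorial : ℝ)))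
          (∑ j ∈ Finset.range (n + 1), (n.choose j : ℝ) * (Real.exp 1 * Bell j)) := by
        apply hasSum_sum
        intro j hj
        exact (ih j (by simpa using hj)).mul_left _
      rw [← hasSum_nat_add_iff' 1]
      have hfun : (fun k : ℕ => ((k + 1 : ℕ) : ℝ) ^ (n + 1) / ((k + 1).factorial : ℝ)) =
          (fun k : ℕ => ∑ j ∈ Finset.range (n + 1),
          (n.choose j : ℝ) * ((k : ℝ) ^ j / (k.factorial : ℝ))) := by
        funext k
        have hk : ((k : ℝ) + 1) ≠ 0 := by positivity
        have hf : (k.factorial : ℝ) ≠ 0 := by positivity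
        rw [Nat.factorial_succ]
        push_cast
        rw [pow_succ]
        have e1 : ((k : ℝ) + 1) ^ n * (k + 1) / ((k + 1) * k.factorial)
            = ((k : ℝ) + 1) ^ n / k.factorial := by field_simp
        rw [e1, add_pow, Finset.sum_div]
        apply Finset.sum_congr rfl
        intro j _
        simp
        ring
      have hval : Real.exp 1 * (Bell (n + 1) : ℝ) -
          ∑ i ∈ Finset.range 1, (i : ℝ) ^ (n + 1) / (i.factorial : ℝ) =
          ∑ j ∈ Finset.range (n + 1), (n.choose j : ℝ) * (Real.exp 1 * Bell j) := by
        rw [Bell_succ']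
        push_cast
        simp [Finset.mul_sum]
        apply Finset.sum_congr rfl
        intro j _
        ring
      rw [hfun, hval]
      exact h

theorem bell_upper (n : ℕ) (hn : 0 < n) (r : ℝ) (hr : 0 < r) :
    (Bell n : ℝ) ≤ (n / (Real.exp 1 * r)) ^ n * Real.exp (Real.exp r) := by
  have h1 := dobinski n
  have h2 : HasSum (fun k : ℕ => (n / (Real.exp 1 * r)) ^ n * ((Real.exp r) ^ k / k.factorial))
      ((n / (Real.exp 1 * r)) ^ n * Real.exp (Real.exp r)) := by
    have h := NormedSpace.expSeries_div_hasSum_exp (Real.exp r)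
    rw [← Real.exp_eq_exp_ℝ] at h
    exact h.mul_left _
  have h3 : Real.exp 1 * Bell n ≤ (n / (Real.exp 1 * r)) ^ n * Real.exp (Real.exp r) := by
    refine hasSum_le (fun k => ?_) h1 h2
    rw [← mul_div_assoc]
    have hnr : (0 : ℝ) < n := by exact_mod_cast hn
    have key : (k : ℝ) ≤ n / (Real.exp 1 * r) * Real.exp (r * k / n) := by
      have := Real.add_one_le_exp (r * k / n - 1)
      rw [Real.exp_sub] at this
      have he := Real.exp_pos 1
      rw [le_div_iff₀ he] at this
      rw [div_mul_eq_mul_div, le_div_iff₀ (by positivity)]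
      calc (k : ℝ) * (Real.exp 1 * r) = n * ((r * k / n - 1 + 1) * Real.exp 1) := by
            field_simp; ring
        _ ≤ _ := by gcongr
    gcongr
    calc (k : ℝ) ^ n ≤ (n / (Real.exp 1 * r) * Real.exp (r * k / n)) ^ n := by gcongr
      _ = _ := by
        rw [mul_pow, ← Real.exp_nat_mul, ← Real.exp_nat_mul]
        congr 2
        field_simp
  have : (1 : ℝ) ≤ Real.exp 1 := Real.one_le_exp (by norm_num)
  have hB : (0 : ℝ) ≤ Bell n := by positivity
  nlinarith

theorem fact_bound (k : ℕ) (hk : 3 ≤ k) : Real.exp 1 * k.factorial ≤ (k : ℝ) ^ k := by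
  induction k, hk using Nat.le_induction with
  | base =>
    have := Real.exp_one_lt_d9
    norm_num [Nat.factorial]
    linarith
  | succ k hk ih =>
    rw [Nat.factorial_succ]
    push_cast
    calc Real.exp 1 * (((k : ℝ) + 1) * k.factorial) = (k + 1) * (Real.exp 1 * k.factorial) := by ring
      _ ≤ (k + 1) * (k : ℝ) ^ k := by gcongr
      _ ≤ (k + 1) * ((k : ℝ) + 1) ^ k := by gcongr; linarith
      _ = _ := by ring

theorem bell_lower (n k : ℕ) (hk : 3 ≤ k) (hkn : k ≤ n) : (k : ℝ) ^ (n - k) ≤ Bell n := by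
  have h1 := dobinski n
  have h2 : (k : ℝ) ^ n / (k.factorial : ℝ) ≤ Real.exp 1 * Bell n :=
    le_hasSum h1 k (fun j _ => by positivity)
  have h3 := fact_bound k hk
  have hf : (0 : ℝ) < k.factorial := by positivity
  rw [div_le_iff₀ hf] at h2
  have h4 : (k : ℝ) ^ n = k ^ (n - k) * k ^ k := by rw [← pow_add]; congr 1; omega
  have hB : (0 : ℝ) ≤ Bell n := by positivity
  have hkk : (0 : ℝ) < (k : ℝ) ^ k := by
    have : 0 < k := by omega
    positivity
  have : (k : ℝ) ^ (n - k) * k ^ k ≤ Bell n * k ^ k := by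
    rw [← h4]
    nlinarith
  exact le_of_mul_le_mul_right this hkk

theorem log_le_aux (n a b : ℕ) (hn : 0 < n) (hb : 0 < b) (h : n ^ b * 10000 ^ a ≤ 27182 ^ a) :
    Real.log n ≤ a / b := by
  have hb' : (0 : ℝ) < b := by exact_mod_cast hb
  have hn' : (0 : ℝ) < n := by exact_mod_cast hn
  rw [le_div_iff₀ hb', mul_comm, ← Real.log_pow, Real.log_le_iff_le_exp (by positivity)]
  have h' : (n : ℝ) ^ b * 10000 ^ a ≤ 27182 ^ a := by exact_mod_cast h
  have he := Real.exp_one_gt_d9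
  calc (n : ℝ) ^ b ≤ (27182 / 10000) ^ a := by
        rw [div_pow, le_div_iff₀ (by positivity)]; exact h'
    _ ≤ (Real.exp 1) ^ a := by gcongr; linarith
    _ = Real.exp a := by rw [← Real.exp_nat_mul]; simp

theorem le_log_aux (n a b : ℕ) (hn : 0 < n) (hb : 0 < b) (h : 27183 ^ a ≤ n ^ b * 10000 ^ a) :
    (a : ℝ) / b ≤ Real.log n := by
  have hb' : (0 : ℝ) < b := by exact_mod_cast hb
  have hn' : (0 : ℝ) < n := by exact_mod_cast hn
  rw [div_le_iff₀ hb', mul_comm, ← Real.log_pow, Real.le_log_iff_exp_le (by positivity)]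
  have h' : (27183 : ℝ) ^ a ≤ n ^ b * 10000 ^ a := by exact_mod_cast h
  have he := Real.exp_one_lt_d9
  calc Real.exp a = (Real.exp 1) ^ a := by rw [← Real.exp_nat_mul]; simp
    _ ≤ (27183 / 10000) ^ a := by gcongr; linarith
    _ ≤ (n : ℝ) ^ b := by
        rw [div_pow, div_le_iff₀ (by positivity)]; exact h'

def bellList : ℕ → List ℕ
  | 0 => [1]
  | n + 1 => bellList n ++
      [((bellList n).zipIdx.map (fun p => n.choose p.2 * p.1)).sum]

theorem bellList_eq (n : ℕ) : bellList n = (List.range (n + 1)).map Bell := by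
  induction n with
  | zero => simp [bellList, Bell]
  | succ n ih =>
    rw [bellList, ih, List.range_succ (n := n + 1), List.map_append]
    congr 1
    simp only [List.map_cons, List.map_nil]
    rw [Bell_succ', Finset.sum_range]
    congr 1
    rw [← List.sum_ofFn]
    congr 1
    apply List.ext_getElem <;> simp [-List.ofFn_succ]

def smallOK (L : List ℕ) : Bool :=
  L.zipIdx.all (fun p => p.2 < 2 ||
    ((List.range 160).any (fun a => decide (0 < a) &&
        (decide (p.2 ^ 40 * 10000 ^ a ≤ 27182 ^ a) &&
          decide (p.1 * (4 * a) ^ p.2 ≤ (3 * p.2 * 40) ^ p.2))) &&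
     (List.range 160).any (fun a => decide (0 < a) &&
        (decide (27183 ^ a ≤ p.2 ^ 40 * 10000 ^ a) &&
          decide ((p.2 * 10000 * 40) ^ p.2 ≤ p.1 * (27182 * a) ^ p.2)))))

theorem smallOK_true : smallOK (bellList 32) = true := by decide +kernel

theorem small_case (n : ℕ) (hn : 2 ≤ n) (hn2 : n ≤ 32) :
    ((1 / Real.exp 1) * (n : ℝ) / Real.log n) ^ n ≤ (Bell n : ℝ) ∧
      (Bell n : ℝ) ≤ ((3 / 4 : ℝ) * (n : ℝ) / Real.log n) ^ n := by
  have h := smallOK_true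
  rw [bellList_eq, smallOK, List.all_eq_true] at h
  have h := h (Bell n, n) (by
    rw [List.mem_zipIdx_iff_getElem?]
    have : n < 32 + 1 := by omega
    simp only [List.getElem?_map, List.getElem?_range this, Option.map_some])
  simp only [Bool.or_eq_true, Bool.and_eq_true, decide_eq_true_eq, List.any_eq_true] at h
  rcases h with h | ⟨⟨a, -, ha, h1, h2⟩, ⟨b, -, hb, h3, h4⟩⟩
  · omega
  have hnr : (0 : ℝ) < n := by exact_mod_cast (show 0 < n by omega)
  have hl : 0 < Real.log n := Real.log_pos (by exact_mod_cast (show 1 < n by omega))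
  have ha' : (0 : ℝ) < a := by exact_mod_cast ha
  have hb' : (0 : ℝ) < b := by exact_mod_cast hb
  have u := log_le_aux n a 40 (by omega) (by norm_num) h1
  have l := le_log_aux n b 40 (by omega) (by norm_num) h3
  have h2' : (Bell n : ℝ) * (4 * a) ^ n ≤ (3 * n * 40) ^ n := by exact_mod_cast h2
  have h4' : ((n : ℝ) * 10000 * 40) ^ n ≤ Bell n * (27182 * b) ^ n := by exact_mod_cast h4
  push_cast at u l
  have he := Real.exp_one_gt_d9
  constructor
  · calc ((1 / Real.exp 1) * (n : ℝ) / Real.log n) ^ n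
        ≤ ((1 / (27182 / 10000)) * (n : ℝ) / (b / 40)) ^ n := by
          gcongr; linarith
      _ = ((n : ℝ) * 10000 * 40) ^ n / (27182 * b) ^ n := by
          rw [← div_pow]; refine congrArg (fun x : ℝ => x ^ n) ?_; field_simp; try norm_num
      _ ≤ _ := by rw [div_le_iff₀ (by positivity)]; exact h4'
  · calc (Bell n : ℝ) ≤ (3 * n * 40) ^ n / (4 * a) ^ n := by
          rw [le_div_iff₀ (by positivity)]; exact h2'
      _ = ((3 / 4 : ℝ) * (n : ℝ) / (a / 40)) ^ n := by
          rw [← div_pow]; refine congrArg (fun x : ℝ => x ^ n) ?_; field_simp; try norm_num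
      _ ≤ _ := by gcongr

theorem large_upper (n : ℕ) (hn : 33 ≤ n) :
    (Bell n : ℝ) ≤ ((3 / 4 : ℝ) * (n : ℝ) / Real.log n) ^ n := by
  have hn33 : (33 : ℝ) ≤ n := by exact_mod_cast hn
  have he1 := Real.exp_one_gt_d9
  have he2 := Real.exp_one_lt_d9
  obtain ⟨r, ⟨hr1, -⟩, hr⟩ : ∃ r ∈ Set.Icc (2.55 : ℝ) n, r * Real.exp r = n := by
    have hc : ContinuousOn (fun r : ℝ => r * Real.exp r) (Set.Icc (2.55 : ℝ) n) := by fun_prop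
    have := intermediate_value_Icc (by linarith) hc
    have hm : (n : ℝ) ∈ Set.Icc ((2.55 : ℝ) * Real.exp 2.55) (n * Real.exp n) := by
      constructor
      · have : Real.exp 2.55 ≤ 12.9 := by
          have h : (Real.exp 2.55) ^ 20 ≤ 12.9 ^ 20 := by
            calc (Real.exp 2.55) ^ 20 = (Real.exp 1) ^ 51 := by
                  rw [← Real.exp_nat_mul, ← Real.exp_nat_mul]; norm_num
              _ ≤ 2.7183 ^ 51 := by gcongr; linarith
              _ ≤ _ := by norm_num
          exact le_of_pow_le_pow_left₀ (by norm_num) (by norm_num) h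
        linarith
      · have : 1 ≤ Real.exp (n : ℝ) := Real.one_le_exp (by linarith)
        nlinarith
    exact this hm
  have hr0 : 0 < r := by linarith
  have hx : Real.exp (1 / r) ≤ 1.481 := by
    have h1 : 1 / r ≤ 20 / 51 := by
      rw [div_le_div_iff₀ hr0 (by norm_num)]; linarith
    refine (Real.exp_le_exp.mpr h1).trans ?_
    have h : (Real.exp (20 / 51)) ^ 51 ≤ 1.481 ^ 51 := by
      calc (Real.exp (20 / 51)) ^ 51 = (Real.exp 1) ^ 20 := by
            rw [← Real.exp_nat_mul, ← Real.exp_nat_mul]; norm_num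
        _ ≤ 2.7183 ^ 20 := by gcongr; linarith
        _ ≤ _ := by norm_num
    exact le_of_pow_le_pow_left₀ (by norm_num) (by norm_num) h
  have hlogr : Real.log r ≤ r * 0.368 := by
    have h := Real.log_le_sub_one_of_pos (show 0 < r / Real.exp 1 by positivity)
    rw [Real.log_div hr0.ne' (by positivity), Real.log_exp] at h
    have : r / Real.exp 1 ≤ r * 0.368 := by
      rw [div_le_iff₀ (by positivity)]
      nlinarith
    linarith
  have hlogn : Real.log n = Real.log r + r := by
    rw [← hr, Real.log_mul hr0.ne' (by positivity), Real.log_exp]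
  have hl : 0 < Real.log n := Real.log_pos (by linarith)
  refine (bell_upper n (by omega) r hr0).trans ?_
  have e1 : Real.exp (Real.exp r) = (Real.exp (1 / r)) ^ n := by
    rw [← Real.exp_nat_mul, ← hr]; congr 1; field_simp
  rw [e1, ← mul_pow]
  gcongr
  rw [div_mul_eq_mul_div, div_le_div_iff₀ (by positivity) hl]
  have h5 : Real.exp (1 / r) * Real.log n ≤ 1.481 * (1.368 * r) := by
    gcongr
    linarith
  have h6 : (1.481 * 1.368) * r ≤ (3 / 4 * Real.exp 1) * r :=
    mul_le_mul_of_nonneg_right (by linarith) hr0.le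
  have h7 : Real.exp (1 / r) * Real.log n ≤ 3 / 4 * Real.exp 1 * r := by linarith
  calc (n : ℝ) * Real.exp (1 / r) * Real.log n = n * (Real.exp (1 / r) * Real.log n) := by ring
    _ ≤ n * (3 / 4 * Real.exp 1 * r) := by gcongr
    _ = _ := by ring

theorem large_lower (n : ℕ) (hn : 33 ≤ n) :
    ((1 / Real.exp 1) * (n : ℝ) / Real.log n) ^ n ≤ (Bell n : ℝ) := by
  have hn33 : (33 : ℝ) ≤ n := by exact_mod_cast hn
  have hn0 : (0 : ℝ) < n := by linarith
  have he1 := Real.exp_one_gt_d9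
  have he2 := Real.exp_one_lt_d9
  set L := Real.log n with hL
  have hLn : Real.exp L = n := Real.exp_log hn0
  have hLe : Real.exp 1 ≤ L := by
    rw [hL, Real.le_log_iff_exp_le hn0]
    calc Real.exp (Real.exp 1) ≤ Real.exp (3 : ℕ) := by
          apply Real.exp_le_exp.mpr; push_cast; linarith
      _ = (Real.exp 1) ^ 3 := by rw [← Real.exp_nat_mul]; simp
      _ ≤ 2.7183 ^ 3 := by gcongr; linarith
      _ ≤ n := by norm_num; linarith
  have hL0 : 0 < L := by linarith
  have hLL : 1 ≤ Real.log L := by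
    rw [Real.le_log_iff_exp_le hL0]; exact hLe
  have hq : Real.exp 1 * L ≤ n := by
    have := Real.add_one_le_exp (L - 1)
    rw [Real.exp_sub, hLn, le_div_iff₀ (by positivity)] at this
    linarith
  have hL2 : L ^ 2 ≤ n := by
    have := Real.add_one_le_exp (L / 2 - 1)
    rw [Real.exp_sub, le_div_iff₀ (by positivity)] at this
    have h2 : (Real.exp (L / 2)) ^ 2 = n := by
      rw [← Real.exp_nat_mul, ← hLn]; congr 1; push_cast; ring
    rw [← h2]
    gcongr
    nlinarith
  set k := ⌈(n : ℝ) / L⌉₊ with hk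
  have hk1 : (n : ℝ) / L ≤ k := Nat.le_ceil _
  have hk2 : (k : ℝ) < n / L + 1 := Nat.ceil_lt_add_one (by positivity)
  have hqe : Real.exp 1 ≤ n / L := by rw [le_div_iff₀ hL0]; exact hq
  have hk3 : 3 ≤ k := by
    have : (2 : ℝ) < k := by linarith
    exact_mod_cast this
  have hkn : k ≤ n := by
    rw [hk]; apply Nat.ceil_le.mpr
    apply div_le_self hn0.le; linarith
  have hkn' : (k : ℝ) ≤ n := by exact_mod_cast hkn
  refine le_trans ?_ (bell_lower n k hk3 hkn)
  have hk0 : (0 : ℝ) < k := by linarith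
  rw [← Real.log_le_log_iff (by positivity) (by positivity), Real.log_pow, Real.log_pow,
    Nat.cast_sub hkn]
  have e2 : Real.log (1 / Real.exp 1 * n / L) = L - Real.log L - 1 := by
    rw [Real.log_div (by positivity) (by positivity), Real.log_mul (by positivity) (by positivity),
      Real.log_div (by positivity) (by positivity), Real.log_exp, Real.log_one]
    ring
  rw [e2]
  have e3 : Real.log (n / L) = L - Real.log L := by
    rw [Real.log_div (by positivity) (by positivity)]
  have hlk : L - Real.log L ≤ Real.log k := by
    rw [← e3]; exact Real.log_le_log (by positivity) hk1
  have hpos : 0 ≤ L - Real.log L := by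
    rw [← e3]; apply Real.log_nonneg; linarith
  have hnL : L ≤ n / L := by rw [le_div_iff₀ hL0]; nlinarith
  have hmul : (n / L) * L = n := by field_simp
  calc (n : ℝ) * (L - Real.log L - 1) ≤ (n - (n / L + 1)) * (L - Real.log L) := by
        have : (n / L) * 1 ≤ (n / L) * Real.log L := by gcongr
        nlinarith
    _ ≤ (n - k) * (L - Real.log L) := by gcongr
    _ ≤ _ := by
        have : (0 : ℝ) ≤ n - k := by linarith
        gcongr

theorem stmt_7 (n : ℕ) (hn : 2 ≤ n) :
    ((1 / Real.exp 1) * (n : ℝ) / Real.log n) ^ n ≤ (Bell n : ℝ) ∧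
      (Bell n : ℝ) ≤ ((3 / 4 : ℝ) * (n : ℝ) / Real.log n) ^ n := by
  by_cases h : n ≤ 32
  · exact small_case n hn h
  · exact ⟨large_lower n (by omega), large_upper n (by omega)⟩
end
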